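/- arXiv:2408.13541 — 2 statements merged into one kernel-verified Lean document; each statement's English description precedes it below -/
import Mathlib

section
/- Let n ≥ 2. There exists a constant C > 0, depending only on n, such that for every radial Lebesgue-measurable set E ⊆ ℝⁿ of finite Lebesgue measure and every line (1-dimensional affine subspace) ℓ ⊆ ℝⁿ, the 1-dimensional Hausdorff measure of E ∩ ℓ satisfies μH^1(E ∩ ℓ) ≤ C · (λ(E))^{1/n}, where λ denotes Lebesgue measure on ℝⁿ. -/
open MeasureTheory Real Set

/-!
Parametrise the line at distance `s` from the origin by the signed distance `t` to the foot of the
perpendicular, so that the point with parameter `t` has norm `√(s ^ 2 + t ^ 2)`. The set `T` of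
parameters `t > 0` of points of `E ∩ ℓ` carries half of the length. If `s = 0`, then `T` consists of
radii of `E`. If `s ≠ 0`, then `n ≥ 2`, and replacing `T` by the radii `r = √(s ^ 2 + t ^ 2)` does
not decrease the polar weight: `t dt = r dr` and `t ^ (n - 2) ≤ r ^ (n - 2)`. In both cases the
radial set with radii `T` has volume at most that of `E`. As the polar weight is increasing, among
radial sets with `|T|` given the ball of radius `|T|` has the least volume, so
`|T| ^ n * volume (ball 0 1) ≤ volume E`. The resulting constant is sharp: for a ball centred at the
origin and a line through its centre all the inequalities are equalities.
-/

open Module Metric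
open scoped ENNReal

section Bathtub

lemma setLIntegral_Ioo_le_of_monotoneOn {f : ℝ → ℝ≥0∞} {T : Set ℝ} {a b : ℝ}
    (hf : MonotoneOn f (Ioi a)) (hT : MeasurableSet T) (hTa : T ⊆ Ioi a)
    (hvol : ENNReal.ofReal (b - a) ≤ volume T) :
    ∫⁻ t in Ioo a b, f t ≤ ∫⁻ t in T, f t := by
  rcases le_or_gt b a with hba | hab
  · simp [Ioo_eq_empty_of_le hba]
  have excess : volume (Ioo a b \ T) ≤ volume (T \ Ioo a b) := by
    have hfin : volume (Ioo a b ∩ T) ≠ ∞ := measure_ne_top_of_subset inter_subset_left (by simp)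
    rw [← ENNReal.add_le_add_iff_left hfin, measure_inter_add_sdiff _ hT, inter_comm,
      measure_inter_add_sdiff _ measurableSet_Ioo, Real.volume_Ioo]
    exact hvol
  have outer : ∫⁻ t in Ioo a b \ T, f t ≤ ∫⁻ t in T \ Ioo a b, f t :=
    calc ∫⁻ t in Ioo a b \ T, f t
        ≤ ∫⁻ _ in Ioo a b \ T, f b :=
          setLIntegral_mono' (measurableSet_Ioo.diff hT) fun _ ht ↦ hf ht.1.1 hab ht.1.2.le
      _ = f b * volume (Ioo a b \ T) := setLIntegral_const _ _
      _ ≤ f b * volume (T \ Ioo a b) := by gcongr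
      _ = ∫⁻ _ in T \ Ioo a b, f b := (setLIntegral_const _ _).symm
      _ ≤ ∫⁻ t in T \ Ioo a b, f t :=
          setLIntegral_mono' (hT.diff measurableSet_Ioo) fun t ht ↦
            hf hab (hTa ht.1) (not_lt.1 fun htb ↦ ht.2 ⟨hTa ht.1, htb⟩)
  calc ∫⁻ t in Ioo a b, f t
      = (∫⁻ t in T ∩ Ioo a b, f t) + ∫⁻ t in Ioo a b \ T, f t := by
        rw [inter_comm, lintegral_inter_add_sdiff _ _ hT]
    _ ≤ (∫⁻ t in T ∩ Ioo a b, f t) + ∫⁻ t in T \ Ioo a b, f t := by gcongr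
    _ = ∫⁻ t in T, f t := lintegral_inter_add_sdiff _ _ measurableSet_Ioo

lemma monotoneOn_ofReal_pow (k : ℕ) : MonotoneOn (fun t : ℝ ↦ ENNReal.ofReal (t ^ k)) (Ioi 0) :=
  fun _ ht _ _ htu ↦ ENNReal.ofReal_le_ofReal (pow_le_pow_left₀ (le_of_lt ht) htu k)

end Bathtub

section Radial

lemma measureReal_ball_pos {X : Type*} [PseudoMetricSpace X] [ProperSpace X] [MeasurableSpace X]
    (μ : Measure X) [μ.IsOpenPosMeasure] [IsFiniteMeasureOnCompacts μ] (x : X) {r : ℝ}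
    (hr : 0 < r) : 0 < μ.real (ball x r) :=
  ENNReal.toReal_pos (measure_ball_pos μ x hr).ne' measure_ball_lt_top.ne

variable {E : Type*} [NormedAddCommGroup E] [NormedSpace ℝ E] [FiniteDimensional ℝ E]
  [MeasurableSpace E] [BorelSpace E] [Nontrivial E] (μ : Measure E) [μ.IsAddHaarMeasure]

lemma measure_preimage_norm {A : Set ℝ} (hA : MeasurableSet A) :
    μ (norm ⁻¹' A) =
      μ.toSphere univ * ∫⁻ r in A ∩ Ioi 0, ENNReal.ofReal (r ^ (finrank ℝ E - 1)) := by
  have hA' : MeasurableSet ((↑) ⁻¹' A : Set (Ioi (0 : ℝ))) := measurable_subtype_coe hA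
  have polar := μ.measurePreserving_homeomorphUnitSphereProd.measure_preimage
    (s := (univ : Set (sphere (0 : E) 1)) ×ˢ ((↑) ⁻¹' A : Set (Ioi (0 : ℝ))))
    (MeasurableSet.univ.prod hA').nullMeasurableSet
  rw [Measure.prod_prod, comap_subtype_coe_apply (measurableSet_singleton _).compl,
    Measure.volumeIoiPow, withDensity_apply _ hA',
    setLIntegral_subtype measurableSet_Ioi _ fun r : ℝ ↦ ENNReal.ofReal (r ^ (finrank ℝ E - 1)),
    Subtype.image_preimage_coe, inter_comm] at polar
  rw [← polar, ← measure_sdiff_null (measure_singleton (μ := μ) 0)]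
  congr 1
  ext x
  simp [and_comm]

lemma measure_ball_le_measure_preimage_norm {T : Set ℝ} (hT : MeasurableSet T) (hT0 : T ⊆ Ioi 0)
    {m : ℝ} (hm : ENNReal.ofReal m ≤ volume T) : μ (ball 0 m) ≤ μ (norm ⁻¹' T) := by
  have hball : ball (0 : E) m = norm ⁻¹' Iio m := by ext x; simp
  rw [hball, measure_preimage_norm μ measurableSet_Iio, measure_preimage_norm μ hT,
    Iio_inter_Ioi, inter_eq_left.2 hT0]
  gcongr _ * ?_
  exact setLIntegral_Ioo_le_of_monotoneOn (monotoneOn_ofReal_pow _) hT hT0 (by rwa [sub_zero])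

lemma volume_le_measure_preimage_norm_rpow {T : Set ℝ} (hT : MeasurableSet T) (hT0 : T ⊆ Ioi 0) :
    volume T ≤ (μ (norm ⁻¹' T) / μ (ball 0 1)) ^ ((1 : ℝ) / finrank ℝ E) := by
  refine ENNReal.le_of_forall_nnreal_lt fun m hm ↦ ?_
  have hdim : (0 : ℝ) < finrank ℝ E := Nat.cast_pos.2 finrank_pos
  rw [one_div, ENNReal.le_rpow_inv_iff hdim, ENNReal.rpow_natCast,
    ENNReal.le_div_iff_mul_le (.inl (measure_ball_pos μ 0 one_pos).ne')
      (.inl measure_ball_lt_top.ne)]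
  calc (m : ℝ≥0∞) ^ finrank ℝ E * μ (ball 0 1)
      = μ (ball 0 (m : ℝ)) := by
        rw [Measure.addHaar_ball μ 0 m.coe_nonneg, ENNReal.ofReal_pow m.coe_nonneg,
          ENNReal.ofReal_coe_nnreal]
    _ ≤ μ (norm ⁻¹' T) :=
        measure_ball_le_measure_preimage_norm μ hT hT0 (by simpa using hm.le)

end Radial

/-- The parameters `t > 0` for which the point at distance `t` from the foot of the perpendicular,
on a line at distance `s` from the origin, lies in the radial set `{x | ‖x‖ ∈ A}`. This is half of
the section of that set by the line. -/
def radialHalfSection (s : ℝ) (A : Set ℝ) : Set ℝ :=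
  {t | 0 < t ∧ √(s ^ 2 + t ^ 2) ∈ A}

namespace radialHalfSection

variable {s : ℝ} {A : Set ℝ}

lemma subset_Ioi : radialHalfSection s A ⊆ Ioi 0 := fun _ ht ↦ ht.1

lemma measurableSet (hA : MeasurableSet A) : MeasurableSet (radialHalfSection s A) :=
  measurableSet_Ioi.inter ((by fun_prop : Measurable fun t : ℝ ↦ √(s ^ 2 + t ^ 2)) hA)

lemma zero_subset : radialHalfSection 0 A ⊆ A := by
  rintro t ⟨ht, htA⟩
  simpa [sqrt_sq ht.le] using htA

lemma sq_add_sq_pos {t : ℝ} (ht : t ∈ radialHalfSection s A) : 0 < s ^ 2 + t ^ 2 :=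
  add_pos_of_nonneg_of_pos (sq_nonneg s) (pow_pos ht.1 2)

lemma injOn_sqrt : InjOn (fun t ↦ √(s ^ 2 + t ^ 2)) (radialHalfSection s A) := by
  intro t ht u hu htu
  have hsq := (sqrt_inj (sq_add_sq_pos ht).le (sq_add_sq_pos hu).le).1 htu
  exact (pow_left_inj₀ ht.1.le hu.1.le two_ne_zero).1 (add_left_cancel hsq)

lemma hasDerivWithinAt_sqrt {t : ℝ} (ht : t ∈ radialHalfSection s A) :
    HasDerivWithinAt (fun t ↦ √(s ^ 2 + t ^ 2)) (t / √(s ^ 2 + t ^ 2))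
      (radialHalfSection s A) t := by
  have h := ((hasDerivAt_pow 2 t).const_add (s ^ 2)).sqrt (sq_add_sq_pos ht).ne'
  rw [Nat.cast_ofNat, Nat.add_one_sub_one, pow_one, mul_div_mul_left _ _ two_ne_zero] at h
  exact h.hasDerivWithinAt

lemma image_sqrt_subset :
    (fun t ↦ √(s ^ 2 + t ^ 2)) '' radialHalfSection s A ⊆ A ∩ Ioi 0 := by
  rintro _ ⟨t, ht, rfl⟩
  exact ⟨ht.2, sqrt_pos.2 (sq_add_sq_pos ht)⟩

lemma setLIntegral_mul_le (hA : MeasurableSet A) {g : ℝ → ℝ≥0∞} (hg : MonotoneOn g (Ioi 0)) :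
    ∫⁻ t in radialHalfSection s A, ENNReal.ofReal t * g t ≤
      ∫⁻ r in A ∩ Ioi 0, ENNReal.ofReal r * g r := by
  have pointwise : ∀ t ∈ radialHalfSection s A, ENNReal.ofReal t * g t ≤
      ENNReal.ofReal |t / √(s ^ 2 + t ^ 2)| *
        (ENNReal.ofReal √(s ^ 2 + t ^ 2) * g √(s ^ 2 + t ^ 2)) := by
    intro t ht
    have hr : 0 < √(s ^ 2 + t ^ 2) := sqrt_pos.2 (sq_add_sq_pos ht)
    have htr : t ≤ √(s ^ 2 + t ^ 2) := le_sqrt_of_sq_le (le_add_of_nonneg_left (sq_nonneg s))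
    rw [← mul_assoc, ← ENNReal.ofReal_mul (abs_nonneg _), abs_of_pos (div_pos ht.1 hr),
      div_mul_cancel₀ _ hr.ne']
    gcongr
    exact hg ht.1 hr htr
  calc ∫⁻ t in radialHalfSection s A, ENNReal.ofReal t * g t
      ≤ ∫⁻ t in radialHalfSection s A, ENNReal.ofReal |t / √(s ^ 2 + t ^ 2)| *
          (ENNReal.ofReal √(s ^ 2 + t ^ 2) * g √(s ^ 2 + t ^ 2)) :=
        setLIntegral_mono' (measurableSet hA) pointwise
    _ = ∫⁻ r in (fun t ↦ √(s ^ 2 + t ^ 2)) '' radialHalfSection s A, ENNReal.ofReal r * g r :=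
        (lintegral_image_eq_lintegral_abs_deriv_mul (measurableSet hA)
          (fun _ ↦ hasDerivWithinAt_sqrt) injOn_sqrt fun r ↦ ENNReal.ofReal r * g r).symm
    _ ≤ ∫⁻ r in A ∩ Ioi 0, ENNReal.ofReal r * g r := lintegral_mono_set image_sqrt_subset

lemma measure_preimage_norm_le {E : Type*} [NormedAddCommGroup E] [NormedSpace ℝ E]
    [FiniteDimensional ℝ E] [MeasurableSpace E] [BorelSpace E] (μ : Measure E)
    [μ.IsAddHaarMeasure] (hA : MeasurableSet A) (hs : s ≠ 0 → 2 ≤ finrank ℝ E) :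
    μ (norm ⁻¹' radialHalfSection s A) ≤ μ (norm ⁻¹' A) := by
  rcases eq_or_ne s 0 with rfl | hs0
  · exact measure_mono (preimage_mono zero_subset)
  obtain ⟨k, hk⟩ := Nat.exists_eq_add_of_le' (hs hs0)
  have : Nontrivial E := nontrivial_of_finrank_pos (R := ℝ) (by lia)
  have weight : ∀ r ∈ Ioi (0 : ℝ), ENNReal.ofReal (r ^ (finrank ℝ E - 1)) =
      ENNReal.ofReal r * ENNReal.ofReal (r ^ k) := fun r hr ↦ by
    rw [hk, Nat.add_succ_sub_one, pow_succ', ENNReal.ofReal_mul (le_of_lt hr)]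
  rw [measure_preimage_norm μ (measurableSet hA), measure_preimage_norm μ hA,
    inter_eq_left.2 subset_Ioi,
    setLIntegral_congr_fun (measurableSet hA) fun t ht ↦ weight t ht.1,
    setLIntegral_congr_fun (hA.inter measurableSet_Ioi) fun r hr ↦ weight r hr.2]
  gcongr _ * ?_
  exact setLIntegral_mul_le hA (monotoneOn_ofReal_pow k)

lemma volume_setOf_sqrt_mem_le (s : ℝ) (A : Set ℝ) :
    volume {t : ℝ | √(s ^ 2 + t ^ 2) ∈ A} ≤ 2 * volume (radialHalfSection s A) := by
  have cover : {t : ℝ | √(s ^ 2 + t ^ 2) ∈ A} ⊆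
      (radialHalfSection s A ∪ Neg.neg ⁻¹' radialHalfSection s A) ∪ {0} := by
    intro t ht
    rcases lt_trichotomy t 0 with hneg | hzero | hpos
    · exact .inl (.inr ⟨neg_pos.2 hneg, by rwa [neg_sq]⟩)
    · exact .inr hzero
    · exact .inl (.inl ⟨hpos, ht⟩)
  calc volume {t : ℝ | √(s ^ 2 + t ^ 2) ∈ A}
      ≤ volume (radialHalfSection s A ∪ Neg.neg ⁻¹' radialHalfSection s A) + volume {(0 : ℝ)} :=
        (measure_mono cover).trans (measure_union_le _ _)
    _ ≤ volume (radialHalfSection s A) + volume (Neg.neg ⁻¹' radialHalfSection s A) := by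
        rw [Real.volume_singleton, add_zero]
        exact measure_union_le _ _
    _ = 2 * volume (radialHalfSection s A) := by rw [Measure.measure_preimage_neg, two_mul]

end radialHalfSection

section Line

variable {E : Type*} [NormedAddCommGroup E]

lemma isometry_add_smul [NormedSpace ℝ E] (p : E) {u : E} (hu : ‖u‖ = 1) :
    Isometry fun t : ℝ ↦ p + t • u :=
  .of_dist_eq fun a b ↦ by
    rw [dist_add_left, dist_eq_norm, ← sub_smul, norm_smul, hu, mul_one, dist_eq_norm]

variable [InnerProductSpace ℝ E] {p u : E}

lemma norm_add_smul_of_inner_eq_zero (hu : ‖u‖ = 1) (hpu : inner ℝ p u = 0) (t : ℝ) :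
    ‖p + t • u‖ = √(‖p‖ ^ 2 + t ^ 2) := by
  rw [eq_comm, sqrt_eq_iff_eq_sq (by positivity) (norm_nonneg _), norm_add_sq_real,
    inner_smul_right, hpu, norm_smul, hu]
  simp

lemma hausdorffMeasure_preimage_norm_inter_range [MeasurableSpace E] [BorelSpace E] (A : Set ℝ)
    (hu : ‖u‖ = 1) (hpu : inner ℝ p u = 0) :
    μH[1] (norm ⁻¹' A ∩ range fun t : ℝ ↦ p + t • u) =
      volume {t : ℝ | √(‖p‖ ^ 2 + t ^ 2) ∈ A} := by
  rw [← image_preimage_eq_inter_range,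
    (isometry_add_smul p hu).hausdorffMeasure_image (.inl zero_le_one), hausdorffMeasure_real]
  simp only [← norm_add_smul_of_inner_eq_zero hu hpu]
  rfl

lemma two_le_finrank_of_inner_eq_zero [FiniteDimensional ℝ E] (hp : p ≠ 0) (hu : u ≠ 0)
    (hpu : inner ℝ p u = 0) : 2 ≤ finrank ℝ E := by
  have independent : LinearIndependent ℝ ![p, u] := by
    refine linearIndependent_of_ne_zero_of_inner_eq_zero (𝕜 := ℝ) ?_ ?_
    · simp [Fin.forall_fin_two, hp, hu]
    · simp [Pairwise, Fin.forall_fin_two, hpu, real_inner_comm p u]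
  simpa using independent.fintype_card_le_finrank

lemma exists_unit_orthogonal_range_eq {ℓ : AffineSubspace ℝ E}
    (hℓ : finrank ℝ ℓ.direction = 1) :
    ∃ p u : E, ‖u‖ = 1 ∧ inner ℝ p u = 0 ∧ (ℓ : Set E) = range fun t : ℝ ↦ p + t • u := by
  have : Nonempty ℓ := by
    rcases ℓ.eq_bot_or_nonempty with rfl | hne
    · rw [AffineSubspace.direction_bot, finrank_bot] at hℓ
      exact absurd hℓ zero_ne_one
    · exact hne.to_subtype
  have : FiniteDimensional ℝ ℓ.direction := .of_finrank_pos (by lia)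
  have : Nontrivial ℓ.direction := nontrivial_of_finrank_pos (R := ℝ) (by lia)
  obtain ⟨u, hu⟩ := exists_norm_eq ℓ.direction zero_le_one
  have hspan := (finrank_eq_one_iff_of_nonzero' u (norm_ne_zero_iff.1 (by simp [hu]))).1 hℓ
  set p := EuclideanGeometry.orthogonalProjection ℓ (0 : E)
  have hp : (p : E) ∈ ℓ.directionᗮ := by
    simpa using EuclideanGeometry.orthogonalProjection_vsub_mem_direction_orthogonal ℓ (0 : E)
  refine ⟨p, u, hu, Submodule.inner_left_of_mem_orthogonal u.2 hp, Subset.antisymm ?_ ?_⟩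
  · intro x hx
    obtain ⟨t, ht⟩ := hspan ⟨x -ᵥ p, AffineSubspace.vsub_mem_direction hx p.2⟩
    exact ⟨t, by simpa [eq_sub_iff_add_eq, add_comm] using congrArg Subtype.val ht⟩
  · rintro _ ⟨t, rfl⟩
    simpa [add_comm] using
      AffineSubspace.vadd_mem_of_mem_direction (ℓ.direction.smul_mem t u.2) p.2

end Line

theorem euclidean_xray_endpoint_general {E : Type*} [NormedAddCommGroup E] [InnerProductSpace ℝ E]
    [FiniteDimensional ℝ E] [MeasurableSpace E] [BorelSpace E] (μ : Measure E)
    [μ.IsAddHaarMeasure] {A : Set ℝ} (hA : MeasurableSet A) {ℓ : AffineSubspace ℝ E}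
    (hℓ : finrank ℝ ℓ.direction = 1) :
    μH[1] (norm ⁻¹' A ∩ (ℓ : Set E)) ≤
      ENNReal.ofReal (2 / μ.real (ball 0 1) ^ ((1 : ℝ) / finrank ℝ E)) *
        μ (norm ⁻¹' A) ^ ((1 : ℝ) / finrank ℝ E) := by
  obtain ⟨p, u, hu, hpu, hrange⟩ := exists_unit_orthogonal_range_eq hℓ
  have hu0 : u ≠ 0 := norm_ne_zero_iff.1 (by simp [hu])
  have : Nontrivial E := nontrivial_of_ne u 0 hu0
  have hdim (hp : ‖p‖ ≠ 0) : 2 ≤ finrank ℝ E :=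
    two_le_finrank_of_inner_eq_zero (norm_ne_zero_iff.1 hp) hu0 hpu
  calc μH[1] (norm ⁻¹' A ∩ (ℓ : Set E))
      = volume {t : ℝ | √(‖p‖ ^ 2 + t ^ 2) ∈ A} := by
        rw [hrange, hausdorffMeasure_preimage_norm_inter_range A hu hpu]
    _ ≤ 2 * volume (radialHalfSection ‖p‖ A) := radialHalfSection.volume_setOf_sqrt_mem_le _ _
    _ ≤ 2 * (μ (norm ⁻¹' radialHalfSection ‖p‖ A) / μ (ball 0 1)) ^ ((1 : ℝ) / finrank ℝ E) := by
        gcongr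
        exact volume_le_measure_preimage_norm_rpow μ (radialHalfSection.measurableSet hA)
          radialHalfSection.subset_Ioi
    _ ≤ 2 * (μ (norm ⁻¹' A) / μ (ball 0 1)) ^ ((1 : ℝ) / finrank ℝ E) := by
        gcongr 2 * (?_ / _) ^ _
        exact radialHalfSection.measure_preimage_norm_le μ hA hdim
    _ = _ := by
        have hball := measureReal_ball_pos μ 0 one_pos
        rw [ENNReal.div_rpow_of_nonneg _ _ (by positivity),
          ENNReal.ofReal_div_of_pos (rpow_pos_of_pos hball _), ← ENNReal.ofReal_rpow_of_pos hball,
          ofReal_measureReal, ENNReal.ofReal_ofNat, ← mul_div_assoc,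
          ENNReal.mul_div_right_comm]

theorem euclidean_xray_endpoint (n : ℕ) (hn : 2 ≤ n) :
    ∃ C : ℝ, 0 < C ∧
      ∀ (E : Set (EuclideanSpace ℝ (Fin n))) (A : Set ℝ), MeasurableSet A →
        E = {x : EuclideanSpace ℝ (Fin n) | ‖x‖ ∈ A} → volume E < ⊤ →
        ∀ ℓ : AffineSubspace ℝ (EuclideanSpace ℝ (Fin n)),
          (ℓ : Set (EuclideanSpace ℝ (Fin n))).Nonempty →
          Module.finrank ℝ ℓ.direction = 1 →
          μH[(1 : ℝ)] (E ∩ (ℓ : Set (EuclideanSpace ℝ (Fin n)))) ≤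
            ENNReal.ofReal C * (volume E) ^ ((1 : ℝ) / n) := by
  have hball := measureReal_ball_pos volume (0 : EuclideanSpace ℝ (Fin n)) one_pos
  refine ⟨_, div_pos two_pos (rpow_pos_of_pos hball ((1 : ℝ) / n)), ?_⟩
  rintro _ A hA rfl - ℓ - hℓ
  have bound := euclidean_xray_endpoint_general volume hA hℓ
  rw [finrank_euclideanSpace_fin] at bound
  exact bound
end

section
/- Let n ≥ 2 and let o = e_{n+1} ∈ Sⁿ, where Sⁿ is the unit sphere in ℝ^{n+1}. There exists a constant C > 0, depending only on n, such that for every radial measurable set E ⊆ Sⁿ and every 2-dimensional linear subspace V ⊆ ℝ^{n+1}, ‖P_V(o)‖ · μH^1(E ∩ Sⁿ ∩ V) ≤ C · (μH^n(E))^{1/n}, where P_V denotes the orthogonal projection of ℝ^{n+1} onto V. -/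
open MeasureTheory Real Set RealInnerProductSpace

/-!
Suppose first that `A ⊆ [0, ∞)`, so that `E` lies in the hemisphere centred at `o`. The Lambert
projection `x ↦ P x / √(1 + ⟪x, o⟫)`, with `P` the orthogonal projection onto `oᗮ`, is Lipschitz
on this hemisphere and sends the points with `⟪x, o⟫ = t` to the sphere of radius `√(1 - t)`.
Hence `μH[n] E` dominates, up to a constant, `∫ r ^ (n - 1) dr` over `R = {r | 1 - r ^ 2 ∈ A}`.

On the great circle `Sⁿ ∩ V`, with `p = ‖P_V o‖`, the point at angle `φ` from the direction of
`P_V o` has `⟪x, o⟫ = p cos φ`, so it is sent to radius `r = √(1 - p cos φ)`. Since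
`dr = p sin φ dφ / (2 r)` and `φ ≲ sin φ ≲ r`, the change of variables from `φ` to `r` gives
`p ∫_B φ ^ (n - 1) dφ ≲ ∫_R r ^ (n - 1) dr`, where `B` is the set of angles of the points of `E`.
The left-hand side is at least `p (|B| / 2) ^ n`, because half of `B` lies beyond `|B| / 2`, and
`p ^ n ≤ p`. The opposite hemisphere is reached by replacing `(o, A)` with `(-o, -A)`.
-/

open Module (finrank)

section PolarCoordinates

variable {E : Type*} [NormedAddCommGroup E] [MeasurableSpace E] [BorelSpace E]

theorem measure_norm_preimage [NormedSpace ℝ E] [FiniteDimensional ℝ E] (μ : Measure E)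
    [μ.IsAddHaarMeasure] {R : Set ℝ} (hR : R ⊆ Ioi 0) :
    μ (norm ⁻¹' R) =
      finrank ℝ E * μ (Metric.ball 0 1) * ∫⁻ r in R, ENNReal.ofReal (r ^ (finrank ℝ E - 1)) := by
  have polar := μ.measurePreserving_homeomorphUnitSphereProd.measure_preimage_emb
    (Homeomorph.measurableEmbedding _) (univ ×ˢ ((↑) ⁻¹' R))
  have image_eq : ((↑) '' (homeomorphUnitSphereProd E ⁻¹' (univ ×ˢ ((↑) ⁻¹' R))) : Set E) =
      norm ⁻¹' R := by
    ext y
    simpa using fun hy ↦ norm_pos_iff.1 (hR hy)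
  have : LocallyCompactSpace (Ioi (0 : ℝ)) := isOpen_Ioi.locallyCompactSpace
  have : IsFiniteMeasureOnCompacts (volume.comap ((↑) : Ioi (0 : ℝ) → ℝ)) :=
    .comap' _ continuous_subtype_val (.subtype_coe measurableSet_Ioi)
  rw [(MeasurableEmbedding.subtype_coe (measurableSet_singleton _).compl).comap_apply, image_eq,
    Measure.prod_prod, Measure.toSphere_apply_univ, Measure.volumeIoiPow, withDensity_apply',
    setLIntegral_subtype measurableSet_Ioi _ fun r : ℝ ↦ .ofReal (r ^ (finrank ℝ E - 1)),
    Subtype.image_preimage_coe, inter_eq_right.2 hR] at polar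
  exact polar

/-- The area `n ωₙ` of the unit sphere of `ℝⁿ`, where `ωₙ` is the volume of the unit ball. -/
noncomputable def unitSphereArea (n : ℕ) : ℝ :=
  n * (√π ^ n / Gamma (n / 2 + 1))

theorem unitSphereArea_pos {n : ℕ} (hn : 0 < n) : 0 < unitSphereArea n := by
  have : 0 < Gamma (n / 2 + 1 : ℝ) := Gamma_pos_of_pos (by positivity)
  unfold unitSphereArea
  positivity

theorem volume_norm_preimage [InnerProductSpace ℝ E] [FiniteDimensional ℝ E] [Nontrivial E]
    {R : Set ℝ} (hR : R ⊆ Ioi 0) :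
    volume (norm ⁻¹' R : Set E) = ENNReal.ofReal (unitSphereArea (finrank ℝ E)) *
      ∫⁻ r in R, ENNReal.ofReal (r ^ (finrank ℝ E - 1)) := by
  rw [measure_norm_preimage _ hR, InnerProductSpace.volume_ball, unitSphereArea,
    ENNReal.ofReal_mul (Nat.cast_nonneg _), ENNReal.ofReal_natCast, ENNReal.ofReal_one, one_pow,
    one_mul]

end PolarCoordinates

theorem half_volume_pow_le_setLIntegral_pow {B : Set ℝ} (hB : MeasurableSet B) (hB0 : B ⊆ Ici 0)
    (hfin : volume B ≠ ⊤) (k : ℕ) :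
    (volume B / 2) ^ (k + 1) ≤ ∫⁻ r in B, ENNReal.ofReal (r ^ k) := by
  set b : ℝ := (volume B / 2).toReal
  have volume_half : volume B / 2 = ENNReal.ofReal b := by
    rw [ENNReal.ofReal_toReal (ENNReal.div_ne_top hfin two_ne_zero)]
  have far_half : volume B / 2 ≤ volume (B \ Ico 0 b) := by
    calc volume B / 2 = volume B - volume (Ico 0 b) := by
          rw [Real.volume_Ico, sub_zero, ← volume_half, ENNReal.sub_half hfin]
      _ ≤ volume (B \ Ico 0 b) := le_measure_sdiff
  calc (volume B / 2) ^ (k + 1) ≤ ENNReal.ofReal (b ^ k) * volume (B \ Ico 0 b) := by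
        rw [pow_succ, ENNReal.ofReal_pow ENNReal.toReal_nonneg, ← volume_half]
        gcongr
    _ = ∫⁻ _ in B \ Ico 0 b, ENNReal.ofReal (b ^ k) := (setLIntegral_const _ _).symm
    _ ≤ ∫⁻ r in B \ Ico 0 b, ENNReal.ofReal (r ^ k) := by
        refine setLIntegral_mono' (hB.diff measurableSet_Ico) fun r hr ↦ ?_
        have : b ≤ r := not_lt.1 fun h ↦ hr.2 ⟨hB0 hr.1, h⟩
        gcongr
    _ ≤ ∫⁻ r in B, ENNReal.ofReal (r ^ k) := lintegral_mono_set sdiff_subset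

section LambertRadius

/-- The norm of the image, under the Lambert projection centred at `o`, of the point at angle `φ`
from the direction of `P_V o` on the great circle `Sⁿ ∩ V`, where `p = ‖P_V o‖`. -/
noncomputable def lambertRadius (p φ : ℝ) : ℝ :=
  √(1 - p * cos φ)

variable {p φ : ℝ}

theorem measurable_lambertRadius (p : ℝ) : Measurable (lambertRadius p) := by
  unfold lambertRadius
  fun_prop

theorem mul_cos_lt_one (hp0 : 0 < p) (hp1 : p ≤ 1) (hφ : φ ∈ Ioo 0 (π / 2)) : p * cos φ < 1 := by
  have : cos φ < 1 := by
    simpa using cos_lt_cos_of_nonneg_of_le_pi le_rfl (by linarith [hφ.2, pi_pos]) hφ.1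
  nlinarith

theorem hasDerivAt_lambertRadius (h : p * cos φ ≠ 1) :
    HasDerivAt (lambertRadius p) (p * sin φ / (2 * lambertRadius p φ)) φ := by
  have := ((hasDerivAt_cos φ).const_mul p).const_sub 1
  rw [mul_neg, neg_neg] at this
  exact this.sqrt (sub_ne_zero.2 h.symm)

theorem one_sub_lambertRadius_sq (h : p * cos φ ≤ 1) :
    1 - lambertRadius p φ ^ 2 = p * cos φ := by
  rw [lambertRadius, sq_sqrt (by linarith), sub_sub_cancel]

theorem lambertRadius_mem_Ioo (hp0 : 0 < p) (hp1 : p ≤ 1) (hφ : φ ∈ Ioo 0 (π / 2)) :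
    lambertRadius p φ ∈ Ioo 0 1 := by
  have := mul_cos_lt_one hp0 hp1 hφ
  have : 0 < cos φ := cos_pos_of_mem_Ioo ⟨by linarith [hφ.1, pi_pos], hφ.2⟩
  refine ⟨sqrt_pos.2 (by linarith), (sqrt_lt' one_pos).2 ?_⟩
  nlinarith

theorem injOn_lambertRadius (hp0 : 0 < p) (hp1 : p ≤ 1) : InjOn (lambertRadius p) (Icc 0 π) := by
  intro φ hφ ψ hψ h
  have hle (θ : ℝ) : p * cos θ ≤ 1 := by nlinarith [cos_le_one θ]
  refine injOn_cos hφ hψ (mul_left_cancel₀ hp0.ne' ?_)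
  rw [← one_sub_lambertRadius_sq (hle φ), h, one_sub_lambertRadius_sq (hle ψ)]

theorem le_pi_mul_half_sin (hφ : φ ∈ Icc 0 (π / 2)) : φ ≤ π * (sin φ / 2) := by
  calc φ = π * (2 / π * φ / 2) := by field_simp
    _ ≤ π * (sin φ / 2) := by gcongr; exact mul_le_sin hφ.1 hφ.2

theorem half_sin_le_lambertRadius (hp1 : p ≤ 1) (hφ : φ ∈ Icc 0 (π / 2)) :
    sin φ / 2 ≤ lambertRadius p φ := by
  have : 0 ≤ cos φ := cos_nonneg_of_mem_Icc ⟨by linarith [hφ.1, pi_pos], hφ.2⟩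
  refine le_sqrt_of_sq_le ?_
  nlinarith [sin_sq_add_cos_sq φ, cos_le_one φ]

/-- One factor `φ` is absorbed by the numerator `p sin φ` of the derivative. -/
theorem mul_pow_le_deriv_mul_lambertRadius_pow (hp0 : 0 < p) (hp1 : p ≤ 1)
    (hφ : φ ∈ Ioo 0 (π / 2)) (k : ℕ) :
    p * φ ^ (k + 1) ≤
      π ^ (k + 1) * (p * sin φ / (2 * lambertRadius p φ) * lambertRadius p φ ^ (k + 1)) := by
  have hφ' := Ioo_subset_Icc_self hφ
  have hpos := (lambertRadius_mem_Ioo hp0 hp1 hφ).1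
  have hsin := le_pi_mul_half_sin hφ'
  have hradius : φ ≤ π * lambertRadius p φ :=
    hsin.trans (by gcongr; exact half_sin_le_lambertRadius hp1 hφ')
  calc p * φ ^ (k + 1) = p * (φ * φ ^ k) := by rw [pow_succ']
    _ ≤ p * (π * (sin φ / 2) * (π * lambertRadius p φ) ^ k) := by
        have := hφ.1.le
        gcongr
        exact this.trans hsin
    _ = π ^ (k + 1) * (p * sin φ / (2 * lambertRadius p φ) * lambertRadius p φ ^ (k + 1)) := by
        field_simp
        ring

theorem ofReal_mul_setLIntegral_preimage_lambertRadius_le (hp0 : 0 < p) (hp1 : p ≤ 1) {R : Set ℝ}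
    (hR : MeasurableSet R) (k : ℕ) :
    ENNReal.ofReal p *
        ∫⁻ φ in Ioo 0 (π / 2) ∩ lambertRadius p ⁻¹' R, ENNReal.ofReal (φ ^ (k + 1)) ≤
      ENNReal.ofReal (π ^ (k + 1)) * ∫⁻ r in R, ENNReal.ofReal (r ^ (k + 1)) := by
  set B := Ioo 0 (π / 2) ∩ lambertRadius p ⁻¹' R
  set r' : ℝ → ℝ := fun φ ↦ p * sin φ / (2 * lambertRadius p φ)
  have hB : MeasurableSet B := measurableSet_Ioo.inter (measurable_lambertRadius p hR)
  have hderiv (φ : ℝ) (hφ : φ ∈ B) : HasDerivWithinAt (lambertRadius p) (r' φ) B φ :=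
    (hasDerivAt_lambertRadius (mul_cos_lt_one hp0 hp1 hφ.1).ne).hasDerivWithinAt
  have hinj : InjOn (lambertRadius p) B := (injOn_lambertRadius hp0 hp1).mono
    fun φ hφ ↦ show φ ∈ Icc 0 π from ⟨hφ.1.1.le, by linarith [hφ.1.2, pi_pos]⟩
  calc _ = ∫⁻ φ in B, ENNReal.ofReal (p * φ ^ (k + 1)) := by
        rw [← lintegral_const_mul _ (by fun_prop)]
        simp_rw [ENNReal.ofReal_mul hp0.le]
    _ ≤ ∫⁻ φ in B, ENNReal.ofReal (π ^ (k + 1)) *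
          (ENNReal.ofReal |r' φ| * ENNReal.ofReal (lambertRadius p φ ^ (k + 1))) := by
        refine setLIntegral_mono' hB fun φ hφ ↦ ?_
        have hr := (lambertRadius_mem_Ioo hp0 hp1 hφ.1).1
        rw [← ENNReal.ofReal_mul (abs_nonneg _), ← ENNReal.ofReal_mul (by positivity)]
        refine ENNReal.ofReal_le_ofReal
          ((mul_pow_le_deriv_mul_lambertRadius_pow hp0 hp1 hφ.1 k).trans ?_)
        gcongr
        exact le_abs_self _
    _ = ENNReal.ofReal (π ^ (k + 1)) *
          ∫⁻ r in lambertRadius p '' B, ENNReal.ofReal (r ^ (k + 1)) := by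
        rw [lintegral_const_mul' _ _ ENNReal.ofReal_ne_top,
          lintegral_image_eq_lintegral_abs_deriv_mul hB hderiv hinj]
    _ ≤ _ := by
        gcongr
        exact image_subset_iff.2 inter_subset_right

theorem ofReal_mul_volume_preimage_lambertRadius_pow_le (hp0 : 0 < p) (hp1 : p ≤ 1) {n : ℕ}
    (hn : 2 ≤ n) (R : Set ℝ) :
    (ENNReal.ofReal p * volume (Ioo 0 (π / 2) ∩ lambertRadius p ⁻¹' R)) ^ n ≤
      ENNReal.ofReal (2 ^ n * π ^ (n - 1)) * ∫⁻ r in R, ENNReal.ofReal (r ^ (n - 1)) := by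
  wlog hR : MeasurableSet R generalizing R
  · calc _ ≤ _ := by gcongr; exact subset_toMeasurable volume R
      _ ≤ _ := this _ (measurableSet_toMeasurable volume R)
      _ = _ := by rw [Measure.restrict_toMeasurable_of_sFinite]
  obtain ⟨k, rfl⟩ := Nat.exists_eq_add_of_le' hn
  set B := Ioo 0 (π / 2) ∩ lambertRadius p ⁻¹' R
  have hB : MeasurableSet B := measurableSet_Ioo.inter (measurable_lambertRadius p hR)
  have hfin : volume B ≠ ⊤ := measure_ne_top_of_subset inter_subset_left measure_Ioo_lt_top.ne
  have p_pow_le : ENNReal.ofReal p ^ (k + 2) ≤ ENNReal.ofReal p :=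
    pow_le_of_le_one zero_le (ENNReal.ofReal_le_one.2 hp1) (by lia)
  calc (ENNReal.ofReal p * volume B) ^ (k + 2)
      = ENNReal.ofReal p ^ (k + 2) * (2 ^ (k + 2) * (volume B / 2) ^ (k + 2)) := by
        rw [mul_pow, ← mul_pow 2, ENNReal.mul_div_cancel two_ne_zero ENNReal.ofNat_ne_top]
    _ ≤ ENNReal.ofReal p * (2 ^ (k + 2) * ∫⁻ φ in B, ENNReal.ofReal (φ ^ (k + 1))) := by
        gcongr
        exact half_volume_pow_le_setLIntegral_pow hB (fun φ hφ ↦ hφ.1.1.le) hfin (k + 1)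
    _ = 2 ^ (k + 2) * (ENNReal.ofReal p * ∫⁻ φ in B, ENNReal.ofReal (φ ^ (k + 1))) :=
        mul_left_comm _ _ _
    _ ≤ 2 ^ (k + 2) *
          (ENNReal.ofReal (π ^ (k + 1)) * ∫⁻ r in R, ENNReal.ofReal (r ^ (k + 1))) :=
        mul_le_mul_right (ofReal_mul_setLIntegral_preimage_lambertRadius_le hp0 hp1 hR k) _
    _ = ENNReal.ofReal (2 ^ (k + 2) * π ^ (k + 1)) * ∫⁻ r in R, ENNReal.ofReal (r ^ (k + 1)) := by
        rw [ENNReal.ofReal_mul (by positivity), ENNReal.ofReal_pow zero_le_two,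
          ENNReal.ofReal_ofNat, mul_assoc]

end LambertRadius

section GreatCircle

variable {F : Type*} [NormedAddCommGroup F] [InnerProductSpace ℝ F]

theorem lipschitzWith_cos_smul_add_sin_smul {u v : F} (hu : ‖u‖ = 1) (hv : ‖v‖ = 1)
    (huv : ⟪u, v⟫ = 0) : LipschitzWith 1 (fun φ : ℝ ↦ cos φ • u + sin φ • v) := by
  have hasDerivAt (φ : ℝ) : HasDerivAt (fun φ : ℝ ↦ cos φ • u + sin φ • v)
      (-sin φ • u + cos φ • v) φ :=
    ((hasDerivAt_cos φ).smul_const u).add ((hasDerivAt_sin φ).smul_const v)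
  refine lipschitzWith_of_nnnorm_deriv_le (fun φ ↦ (hasDerivAt φ).differentiableAt) fun φ ↦ ?_
  have speed_sq : ‖-sin φ • u + cos φ • v‖ ^ 2 = 1 := by
    rw [norm_add_sq_real, real_inner_smul_left, real_inner_smul_right, huv, norm_smul, norm_smul,
      hu, hv]
    simp
  rw [(hasDerivAt φ).deriv, ← NNReal.coe_le_coe, coe_nnnorm, NNReal.coe_one]
  exact (pow_le_one_iff_of_nonneg (norm_nonneg _) two_ne_zero).1 speed_sq.le

theorem exists_orthonormalBasis_fin_two_apply_zero_eq [FiniteDimensional ℝ F]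
    (hF : finrank ℝ F = 2) {w : F} (hw : ‖w‖ = 1) :
    ∃ b : OrthonormalBasis (Fin 2) ℝ F, b 0 = w := by
  have orthonormal : Orthonormal ℝ (({0} : Set (Fin 2)).domRestrict fun _ ↦ w) :=
    ⟨fun _ ↦ hw, fun i j hij ↦ (hij (Subsingleton.elim i j)).elim⟩
  obtain ⟨b, hb⟩ := orthonormal.exists_orthonormalBasis_extension_of_card_eq (by simpa using hF)
  exact ⟨b, hb 0 rfl⟩

theorem exists_eq_cos_smul_add_sin_smul
    (b : OrthonormalBasis (Fin 2) ℝ F) {x : F} (hx : ‖x‖ = 1) :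
    ∃ φ ∈ Icc 0 π, cos φ = ⟪b 0, x⟫ ∧
      (x = cos φ • b 0 + sin φ • b 1 ∨ x = cos φ • b 0 + sin φ • -b 1) := by
  have expansion : x = ⟪b 0, x⟫ • b 0 + ⟪b 1, x⟫ • b 1 := by
    rw [← Fin.sum_univ_two fun i ↦ ⟪b i, x⟫ • b i, b.sum_repr']
  have sq_add_sq : ⟪b 0, x⟫ ^ 2 + ⟪b 1, x⟫ ^ 2 = 1 := by
    have := b.sum_sq_norm_inner_right x
    simpa [Fin.sum_univ_two, hx] using this
  have hcos : cos (arccos ⟪b 0, x⟫) = ⟪b 0, x⟫ := cos_arccos (by nlinarith) (by nlinarith)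
  have hsin : sin (arccos ⟪b 0, x⟫) = |⟪b 1, x⟫| := by
    rw [sin_arccos, ← sqrt_sq_eq_abs, ← sq_add_sq, add_sub_cancel_left]
  refine ⟨arccos ⟪b 0, x⟫, ⟨arccos_nonneg _, arccos_le_pi _⟩, hcos, ?_⟩
  rw [hcos, hsin]
  rcases abs_choice ⟪b 1, x⟫ with h | h <;> rw [h]
  · exact .inl expansion
  · exact .inr (by rwa [neg_smul_neg])

variable [MeasurableSpace F] [BorelSpace F]

theorem hausdorffMeasure_unit_circle_le [FiniteDimensional ℝ F] (hF : finrank ℝ F = 2) {w : F}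
    (hw : ‖w‖ = 1) (S : Set ℝ) :
    μH[1] {x : F | ‖x‖ = 1 ∧ ⟪w, x⟫ ∈ S} ≤ 2 * volume (Icc 0 π ∩ cos ⁻¹' S) := by
  obtain ⟨b, rfl⟩ := exists_orthonormalBasis_fin_two_apply_zero_eq hF hw
  set B := Icc 0 π ∩ cos ⁻¹' S
  let arc (v : F) (φ : ℝ) : F := cos φ • b 0 + sin φ • v
  have cover : {x : F | ‖x‖ = 1 ∧ ⟪b 0, x⟫ ∈ S} ⊆ arc (b 1) '' B ∪ arc (-b 1) '' B := by
    rintro x ⟨hx, hxS⟩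
    obtain ⟨φ, hφ, hcos, rfl | rfl⟩ := exists_eq_cos_smul_add_sin_smul b hx
    · exact .inl ⟨φ, ⟨hφ, by rwa [mem_preimage, hcos]⟩, rfl⟩
    · exact .inr ⟨φ, ⟨hφ, by rwa [mem_preimage, hcos]⟩, rfl⟩
  have arc_le {v : F} (hv : ‖v‖ = 1) (h : ⟪b 0, v⟫ = 0) : μH[1] (arc v '' B) ≤ volume B := by
    simpa [hausdorffMeasure_real] using
      (lipschitzWith_cos_smul_add_sin_smul hw hv h).hausdorffMeasure_image_le zero_le_one B
  have hb : ⟪b 0, b 1⟫ = 0 := b.inner_eq_zero zero_ne_one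
  calc _ ≤ μH[1] (arc (b 1) '' B) + μH[1] (arc (-b 1) '' B) :=
        (measure_mono cover).trans (measure_union_le _ _)
    _ ≤ volume B + volume B := by
        gcongr
        · exact arc_le (b.norm_eq_one 1) hb
        · exact arc_le (by rw [norm_neg, b.norm_eq_one]) (by rw [inner_neg_right, hb, neg_zero])
    _ = _ := (two_mul _).symm

end GreatCircle

section LambertProjection

variable {F : Type*} [NormedAddCommGroup F] [InnerProductSpace ℝ F]

/-- The radial subset of the unit sphere with centre `o` and profile `A`: the points whose height
`⟪x, o⟫` lies in `A`. -/
def radialSet (o : F) (A : Set ℝ) : Set F :=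
  {x | ‖x‖ = 1 ∧ ⟪x, o⟫ ∈ A}

theorem radialSet_mono (o : F) {A B : Set ℝ} (h : A ⊆ B) : radialSet o A ⊆ radialSet o B :=
  fun _ hx ↦ ⟨hx.1, h hx.2⟩

theorem radialSet_neg (o : F) (A : Set ℝ) : radialSet (-o) (-A) = radialSet o A := by
  simp [radialSet]

/-- The Lambert azimuthal equal-area projection of the unit sphere centred at `o`. The usual factor
`√2` is left out, so that the hemisphere centred at `o` is sent onto the unit ball of `oᗮ`. -/
noncomputable def lambertProjection (o x : F) : (ℝ ∙ o)ᗮ :=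
  (√(1 + ⟪x, o⟫))⁻¹ • (ℝ ∙ o)ᗮ.orthogonalProjectionOnto x

theorem abs_inv_sqrt_one_add_sub_le {s t : ℝ} (hs : 0 ≤ s) (ht : 0 ≤ t) :
    |(√(1 + s))⁻¹ - (√(1 + t))⁻¹| ≤ |s - t| := by
  have hs1 : 1 ≤ √(1 + s) := one_le_sqrt.2 (by linarith)
  have ht1 : 1 ≤ √(1 + t) := one_le_sqrt.2 (by linarith)
  calc |(√(1 + s))⁻¹ - (√(1 + t))⁻¹| = |√(1 + t) - √(1 + s)| / (√(1 + s) * √(1 + t)) := by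
        have hs0 : 0 < √(1 + s) := by linarith
        have ht0 : 0 < √(1 + t) := by linarith
        rw [inv_sub_inv hs0.ne' ht0.ne', abs_div, abs_of_pos (mul_pos hs0 ht0)]
    _ ≤ |√(1 + t) - √(1 + s)| :=
        div_le_self (abs_nonneg _) (one_le_mul_of_one_le_of_one_le hs1 ht1)
    _ ≤ |√(1 + t) - √(1 + s)| * |√(1 + t) + √(1 + s)| :=
        le_mul_of_one_le_right (abs_nonneg _) (le_abs_self _ |>.trans' (by linarith))
    _ = |s - t| := by
        rw [← abs_mul, abs_sub_comm s t]
        congr 1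
        linear_combination sq_sqrt (by linarith : 0 ≤ 1 + t) - sq_sqrt (by linarith : 0 ≤ 1 + s)

theorem lipschitzOnWith_lambertProjection {o : F} (ho : ‖o‖ = 1) :
    LipschitzOnWith 2 (lambertProjection o) (radialSet o (Ici 0)) := by
  refine LipschitzOnWith.of_dist_le_mul fun x ⟨_, hxo⟩ y ⟨hy, hyo⟩ ↦ ?_
  let P := (ℝ ∙ o)ᗮ.orthogonalProjectionOnto
  let a (x : F) : ℝ := (√(1 + ⟪x, o⟫))⁻¹
  have norm_P_le (z : F) : ‖P z‖ ≤ ‖z‖ := (ℝ ∙ o)ᗮ.norm_orthogonalProjectionOnto_apply_le z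
  have ha : |a x| ≤ 1 := by
    rw [abs_of_nonneg (by positivity)]
    exact inv_le_one_of_one_le₀ (one_le_sqrt.2 (le_add_of_nonneg_right hxo))
  have ha_sub : |a x - a y| ≤ ‖x - y‖ :=
    calc |a x - a y| ≤ |⟪x - y, o⟫| := by
          rw [inner_sub_left]; exact abs_inv_sqrt_one_add_sub_le hxo hyo
      _ ≤ ‖x - y‖ := by simpa [ho] using abs_real_inner_le_norm (x - y) o
  have split : lambertProjection o x - lambertProjection o y =
      a x • P (x - y) + (a x - a y) • P y := by
    change a x • P x - a y • P y = _
    rw [map_sub]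
    module
  calc dist (lambertProjection o x) (lambertProjection o y)
      = ‖a x • P (x - y) + (a x - a y) • P y‖ := by rw [dist_eq_norm, split]
    _ ≤ |a x| * ‖P (x - y)‖ + |a x - a y| * ‖P y‖ := by
        simpa only [norm_smul, norm_eq_abs] using norm_add_le (a x • P (x - y)) ((a x - a y) • P y)
    _ ≤ 1 * ‖x - y‖ + ‖x - y‖ * 1 := by
        gcongr
        · exact norm_P_le _
        · exact (norm_P_le y).trans_eq hy
    _ = 2 * dist x y := by rw [dist_eq_norm]; ring

theorem exists_lambertProjection_eq {o : F} (ho : ‖o‖ = 1) {y : (ℝ ∙ o)ᗮ} (hy : ‖y‖ ^ 2 < 2) :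
    ∃ x : F, ‖x‖ = 1 ∧ ⟪x, o⟫ = 1 - ‖y‖ ^ 2 ∧ lambertProjection o x = y := by
  have hyo : ⟪(y : F), o⟫ = 0 := Submodule.mem_orthogonal_singleton_iff_inner_left.1 y.2
  have hpos : 0 < 2 - ‖y‖ ^ 2 := sub_pos.2 hy
  let x : F := √(2 - ‖y‖ ^ 2) • (y : F) + (1 - ‖y‖ ^ 2) • o
  have inner_x : ⟪x, o⟫ = 1 - ‖y‖ ^ 2 := by
    simp [x, inner_add_left, real_inner_smul_left, hyo, ho]
  have norm_x_sq : ‖x‖ ^ 2 = 1 := by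
    rw [norm_add_sq_real, real_inner_smul_left, real_inner_smul_right, hyo, norm_smul, norm_smul,
      mul_pow, mul_pow, norm_eq_abs, norm_eq_abs, sq_abs, sq_abs, sq_sqrt hpos.le, ho,
      Submodule.coe_norm]
    ring
  have proj_x : (ℝ ∙ o)ᗮ.orthogonalProjectionOnto x = √(2 - ‖y‖ ^ 2) • y := by
    simp [x]
  refine ⟨x, (pow_eq_one_iff_of_nonneg (norm_nonneg x) two_ne_zero).1 norm_x_sq, inner_x, ?_⟩
  rw [lambertProjection, inner_x, proj_x, show 1 + (1 - ‖y‖ ^ 2) = 2 - ‖y‖ ^ 2 by ring,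
    inv_smul_smul₀ (sqrt_pos.2 hpos).ne']

variable [FiniteDimensional ℝ F] [MeasurableSpace F] [BorelSpace F]

theorem volume_le_hausdorffMeasure (s : Set F) : volume s ≤ μH[finrank ℝ F] s := by
  let b := stdOrthonormalBasis ℝ F
  let e : F ≃ᵐ (Fin (finrank ℝ F) → ℝ) :=
    b.measurableEquiv.trans (MeasurableEquiv.toLp 2 (Fin (finrank ℝ F) → ℝ)).symm
  have he : MeasurePreserving e := (EuclideanSpace.volume_preserving_symm_measurableEquiv_toLp
    _).comp b.measurePreserving_measurableEquiv
  have hlip : LipschitzWith 1 e := by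
    have := (PiLp.lipschitzWith_ofLp 2 fun _ : Fin (finrank ℝ F) ↦ ℝ).comp b.repr.lipschitz
    rwa [one_mul] at this
  calc volume s = volume (e '' s) := by
        rw [← he.measure_preimage_equiv, e.injective.preimage_image]
    _ = μH[finrank ℝ F] (e '' s) := by
        rw [← hausdorffMeasure_pi_real, Fintype.card_fin]
    _ ≤ μH[finrank ℝ F] s := by
        simpa using hlip.hausdorffMeasure_image_le (Nat.cast_nonneg _) s

theorem volume_one_sub_norm_sq_mem_le {o : F} (ho : ‖o‖ = 1) {A : Set ℝ} (hA : A ⊆ Ici 0) :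
    volume {y : (ℝ ∙ o)ᗮ | 1 - ‖y‖ ^ 2 ∈ A} ≤
      2 ^ finrank ℝ (ℝ ∙ o)ᗮ * μH[finrank ℝ (ℝ ∙ o)ᗮ] (radialSet o A) := by
  have covered : {y : (ℝ ∙ o)ᗮ | 1 - ‖y‖ ^ 2 ∈ A} ⊆ lambertProjection o '' radialSet o A := by
    intro y hy
    have : 0 ≤ 1 - ‖y‖ ^ 2 := hA hy
    obtain ⟨x, hx, hxo, rfl⟩ := exists_lambertProjection_eq ho (y := y) (by linarith)
    exact ⟨x, ⟨hx, hxo ▸ hy⟩, rfl⟩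
  calc _ ≤ volume (lambertProjection o '' radialSet o A) := measure_mono covered
    _ ≤ μH[finrank ℝ (ℝ ∙ o)ᗮ] (lambertProjection o '' radialSet o A) :=
        volume_le_hausdorffMeasure _
    _ ≤ _ := by
        simpa using ((lipschitzOnWith_lambertProjection ho).mono
          (radialSet_mono o hA)).hausdorffMeasure_image_le (Nat.cast_nonneg (finrank ℝ (ℝ ∙ o)ᗮ))

end LambertProjection

section RadialXray

variable {F : Type*} [NormedAddCommGroup F] [InnerProductSpace ℝ F] [FiniteDimensional ℝ F]
  [MeasurableSpace F] [BorelSpace F] {o : F} {n : ℕ}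

theorem setLIntegral_pow_le_hausdorffMeasure_radialSet (ho : ‖o‖ = 1)
    (hF : finrank ℝ F = n + 1) (hn : 0 < n) {A : Set ℝ} (hA : A ⊆ Ici 0) :
    ∫⁻ r in {r | 0 < r ∧ 1 - r ^ 2 ∈ A}, ENNReal.ofReal (r ^ (n - 1)) ≤
      ENNReal.ofReal (2 ^ n / unitSphereArea n) * μH[n] (radialSet o A) := by
  have : Fact (finrank ℝ F = n + 1) := ⟨hF⟩
  have finrank_eq : finrank ℝ (ℝ ∙ o)ᗮ = n :=
    Submodule.finrank_orthogonal_span_singleton (norm_ne_zero_iff.1 (ho ▸ one_ne_zero))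
  have : Nontrivial (ℝ ∙ o)ᗮ := Module.nontrivial_of_finrank_pos (R := ℝ) (finrank_eq ▸ hn)
  have area_pos := unitSphereArea_pos hn
  set I := ∫⁻ r in {r | 0 < r ∧ 1 - r ^ 2 ∈ A}, ENNReal.ofReal (r ^ (n - 1))
  have polar : ENNReal.ofReal (unitSphereArea n) * I ≤ 2 ^ n * μH[n] (radialSet o A) := by
    calc _ = volume (norm ⁻¹' {r : ℝ | 0 < r ∧ 1 - r ^ 2 ∈ A} : Set (ℝ ∙ o)ᗮ) := by
          rw [volume_norm_preimage fun r hr ↦ hr.1, finrank_eq]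
      _ ≤ volume {y : (ℝ ∙ o)ᗮ | 1 - ‖y‖ ^ 2 ∈ A} := measure_mono fun y hy ↦ hy.2
      _ ≤ _ := finrank_eq ▸ volume_one_sub_norm_sq_mem_le ho hA
  calc I = ENNReal.ofReal (unitSphereArea n)⁻¹ * (ENNReal.ofReal (unitSphereArea n) * I) := by
        rw [← mul_assoc, ← ENNReal.ofReal_mul (by positivity), inv_mul_cancel₀ area_pos.ne',
          ENNReal.ofReal_one, one_mul]
    _ ≤ ENNReal.ofReal (unitSphereArea n)⁻¹ * (2 ^ n * μH[n] (radialSet o A)) := by gcongr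
    _ = _ := by
        rw [div_eq_inv_mul, ENNReal.ofReal_mul (by positivity), ENNReal.ofReal_pow zero_le_two,
          ENNReal.ofReal_ofNat, mul_assoc]

theorem ofReal_mul_volume_angles_pow_le (ho : ‖o‖ = 1) (hF : finrank ℝ F = n + 1)
    (hn : 2 ≤ n) {A : Set ℝ} (hA : A ⊆ Ici 0) {p : ℝ} (hp0 : 0 < p) (hp1 : p ≤ 1) :
    (ENNReal.ofReal p * volume {φ ∈ Ioo 0 (π / 2) | p * cos φ ∈ A}) ^ n ≤
      ENNReal.ofReal (4 ^ n * π ^ (n - 1) / unitSphereArea n) * μH[n] (radialSet o A) := by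
  set R := {r : ℝ | 0 < r ∧ 1 - r ^ 2 ∈ A}
  have angles_subset : {φ ∈ Ioo 0 (π / 2) | p * cos φ ∈ A} ⊆
      Ioo 0 (π / 2) ∩ lambertRadius p ⁻¹' R := by
    rintro φ ⟨hφ, hφA⟩
    refine ⟨hφ, (lambertRadius_mem_Ioo hp0 hp1 hφ).1, ?_⟩
    rwa [one_sub_lambertRadius_sq (mul_cos_lt_one hp0 hp1 hφ).le]
  calc _ ≤ (ENNReal.ofReal p * volume (Ioo 0 (π / 2) ∩ lambertRadius p ⁻¹' R)) ^ n := by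
        gcongr
    _ ≤ ENNReal.ofReal (2 ^ n * π ^ (n - 1)) * ∫⁻ r in R, ENNReal.ofReal (r ^ (n - 1)) :=
        ofReal_mul_volume_preimage_lambertRadius_pow_le hp0 hp1 hn R
    _ ≤ ENNReal.ofReal (2 ^ n * π ^ (n - 1)) *
          (ENNReal.ofReal (2 ^ n / unitSphereArea n) * μH[n] (radialSet o A)) := by
        gcongr
        exact setLIntegral_pow_le_hausdorffMeasure_radialSet ho hF (by lia) hA
    _ = _ := by
        rw [← mul_assoc, ← ENNReal.ofReal_mul (by positivity), mul_div_assoc', mul_right_comm,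
          ← mul_pow]
        norm_num

theorem hausdorffMeasure_radialSet_inter_le {A : Set ℝ} (hA : A ⊆ Ici 0) {V : Submodule ℝ F}
    (hV : finrank ℝ V = 2) (hp : 0 < ‖V.orthogonalProjectionOnto o‖) :
    μH[1] (radialSet o A ∩ V) ≤
      2 * volume {φ ∈ Ioo 0 (π / 2) | ‖V.orthogonalProjectionOnto o‖ * cos φ ∈ A} := by
  set p := ‖V.orthogonalProjectionOnto o‖
  let w : V := p⁻¹ • V.orthogonalProjectionOnto o
  have norm_w : ‖w‖ = 1 := norm_smul_inv_norm (𝕜 := ℝ) (norm_pos_iff.1 hp)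
  have inner_eq (x : V) : p * ⟪w, x⟫ = ⟪(x : F), o⟫ := by
    rw [real_inner_smul_left, mul_inv_cancel_left₀ hp.ne', real_inner_comm,
      Submodule.inner_orthogonalProjectionOnto_eq_of_mem_left]
  have section_subset : radialSet o A ∩ V ⊆
      V.subtypeₗᵢ '' {x : V | ‖x‖ = 1 ∧ ⟪w, x⟫ ∈ (p * ·) ⁻¹' A} := by
    rintro x ⟨⟨hx, hxA⟩, hxV⟩
    exact ⟨⟨x, hxV⟩, ⟨hx, by rwa [mem_preimage, inner_eq]⟩, rfl⟩
  have acute : Icc 0 π ∩ cos ⁻¹' ((p * ·) ⁻¹' A) ⊆ {φ ∈ Icc 0 (π / 2) | p * cos φ ∈ A} := by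
    rintro φ ⟨hφ, hφA⟩
    have : 0 ≤ cos φ := nonneg_of_mul_nonneg_right (hA hφA) hp
    refine ⟨⟨hφ.1, not_lt.1 fun h ↦ this.not_gt ?_⟩, hφA⟩
    exact cos_neg_of_pi_div_two_lt_of_lt h (by linarith [hφ.2, pi_pos])
  calc μH[1] (radialSet o A ∩ V)
      ≤ μH[1] {x : V | ‖x‖ = 1 ∧ ⟪w, x⟫ ∈ (p * ·) ⁻¹' A} := by
        rw [← V.subtypeₗᵢ.isometry.hausdorffMeasure_image (.inl zero_le_one)]
        exact measure_mono section_subset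
    _ ≤ 2 * volume {φ ∈ Icc 0 (π / 2) | p * cos φ ∈ A} :=
        (hausdorffMeasure_unit_circle_le hV norm_w _).trans (by gcongr)
    _ = _ := by
        congr 1
        exact measure_congr (Ioo_ae_eq_Icc.symm.inter .rfl)

/-- The constant of the X-ray estimate for radial subsets of a hemisphere of `Sⁿ`. -/
noncomputable def hemisphereXrayConst (n : ℕ) : ℝ :=
  2 * (4 ^ n * π ^ (n - 1) / unitSphereArea n) ^ ((1 : ℝ) / n)

theorem hemisphereXrayConst_pos (hn : 0 < n) : 0 < hemisphereXrayConst n := by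
  have := unitSphereArea_pos hn
  unfold hemisphereXrayConst
  positivity

theorem ofReal_mul_hausdorffMeasure_radialSet_inter_le (ho : ‖o‖ = 1) (hF : finrank ℝ F = n + 1)
    (hn : 2 ≤ n) {A : Set ℝ} (hA : A ⊆ Ici 0) {V : Submodule ℝ F} (hV : finrank ℝ V = 2) :
    ENNReal.ofReal ‖V.orthogonalProjectionOnto o‖ * μH[1] (radialSet o A ∩ V) ≤
      ENNReal.ofReal (hemisphereXrayConst n) * μH[n] (radialSet o A) ^ ((1 : ℝ) / n) := by
  set p := ‖V.orthogonalProjectionOnto o‖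
  obtain hp0 | hp0 : 0 = p ∨ 0 < p := (norm_nonneg _).eq_or_lt
  · simp [← hp0]
  have hp1 : p ≤ 1 := (V.norm_orthogonalProjectionOnto_apply_le o).trans_eq ho
  have area_pos := unitSphereArea_pos (n := n) (by lia)
  set c := 4 ^ n * π ^ (n - 1) / unitSphereArea n with hc
  have hc0 : 0 < c := by positivity
  have root_le : ENNReal.ofReal p * volume {φ ∈ Ioo 0 (π / 2) | p * cos φ ∈ A} ≤
      (ENNReal.ofReal c * μH[n] (radialSet o A)) ^ ((1 : ℝ) / n) := by
    rw [one_div, ENNReal.le_rpow_inv_iff (by positivity), ENNReal.rpow_natCast]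
    exact ofReal_mul_volume_angles_pow_le ho hF hn hA hp0 hp1
  calc _ ≤ ENNReal.ofReal p * (2 * volume {φ ∈ Ioo 0 (π / 2) | p * cos φ ∈ A}) := by
        gcongr
        exact hausdorffMeasure_radialSet_inter_le hA hV hp0
    _ = 2 * (ENNReal.ofReal p * volume {φ ∈ Ioo 0 (π / 2) | p * cos φ ∈ A}) :=
        mul_left_comm _ _ _
    _ ≤ 2 * (ENNReal.ofReal c * μH[n] (radialSet o A)) ^ ((1 : ℝ) / n) := by gcongr
    _ = _ := by
        rw [hemisphereXrayConst, ← hc, ENNReal.ofReal_mul zero_le_two, ENNReal.ofReal_ofNat,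
          mul_assoc, ← ENNReal.ofReal_rpow_of_pos hc0,
          ENNReal.mul_rpow_of_nonneg _ _ (by positivity)]

theorem spherical_xray_endpoint_general (ho : ‖o‖ = 1) (hF : finrank ℝ F = n + 1) (hn : 2 ≤ n)
    (A : Set ℝ) {V : Submodule ℝ F} (hV : finrank ℝ V = 2) :
    ENNReal.ofReal ‖V.orthogonalProjectionOnto o‖ * μH[1] (radialSet o A ∩ V) ≤
      ENNReal.ofReal (2 * hemisphereXrayConst n) * μH[n] (radialSet o A) ^ ((1 : ℝ) / n) := by
  set p := ‖V.orthogonalProjectionOnto o‖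
  set bound := ENNReal.ofReal (hemisphereXrayConst n) * μH[n] (radialSet o A) ^ ((1 : ℝ) / n)
  have upper : ENNReal.ofReal p * μH[1] (radialSet o (A ∩ Ici 0) ∩ V) ≤ bound :=
    (ofReal_mul_hausdorffMeasure_radialSet_inter_le ho hF hn inter_subset_right hV).trans <| by
      unfold bound
      gcongr
      exact radialSet_mono o inter_subset_left
  have lower : ENNReal.ofReal p * μH[1] (radialSet (-o) (-A ∩ Ici 0) ∩ V) ≤ bound := by
    have := ofReal_mul_hausdorffMeasure_radialSet_inter_le (o := -o) (by rwa [norm_neg]) hF hn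
      (inter_subset_right (s := -A)) hV
    rw [map_neg, norm_neg] at this
    refine this.trans ?_
    unfold bound
    gcongr
    exact (radialSet_mono _ inter_subset_left).trans_eq (radialSet_neg o A)
  have cover : radialSet o A ∩ V ⊆
      radialSet o (A ∩ Ici 0) ∩ V ∪ radialSet (-o) (-A ∩ Ici 0) ∩ V := by
    rintro x ⟨⟨hx, hxA⟩, hxV⟩
    rcases le_total 0 ⟪x, o⟫ with h | h
    · exact .inl ⟨⟨hx, hxA, h⟩, hxV⟩
    · exact .inr ⟨⟨hx, by simpa using hxA, by simpa using h⟩, hxV⟩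
  calc _ ≤ ENNReal.ofReal p * μH[1] (radialSet o (A ∩ Ici 0) ∩ V) +
          ENNReal.ofReal p * μH[1] (radialSet (-o) (-A ∩ Ici 0) ∩ V) := by
        rw [← mul_add]
        gcongr
        exact (measure_mono cover).trans (measure_union_le _ _)
    _ ≤ bound + bound := add_le_add upper lower
    _ = _ := by rw [← two_mul, ENNReal.ofReal_mul zero_le_two, ENNReal.ofReal_ofNat, mul_assoc]

end RadialXray

theorem spherical_xray_endpoint (n : ℕ) (hn : 2 ≤ n) :
    ∃ C : ℝ, 0 < C ∧
      ∀ (E : Set (EuclideanSpace ℝ (Fin (n + 1)))) (A : Set ℝ), MeasurableSet A →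
        E = {x : EuclideanSpace ℝ (Fin (n + 1)) |
              ‖x‖ = 1 ∧ ⟪x, EuclideanSpace.single (Fin.last n) (1 : ℝ)⟫ ∈ A} →
        ∀ V : Submodule ℝ (EuclideanSpace ℝ (Fin (n + 1))),
          Module.finrank ℝ V = 2 →
          ENNReal.ofReal ‖Submodule.orthogonalProjectionOnto V (EuclideanSpace.single (Fin.last n) (1 : ℝ))‖ *
              μH[(1 : ℝ)] (E ∩ {x : EuclideanSpace ℝ (Fin (n + 1)) | ‖x‖ = 1} ∩
                (V : Set (EuclideanSpace ℝ (Fin (n + 1))))) ≤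
            ENNReal.ofReal C * (μH[(n : ℝ)] E) ^ ((1 : ℝ) / n) := by
  refine ⟨2 * hemisphereXrayConst n, mul_pos two_pos (hemisphereXrayConst_pos (by lia)), ?_⟩
  rintro _ A - rfl V hV
  refine le_trans ?_ (spherical_xray_endpoint_general (by simp) finrank_euclideanSpace_fin hn A hV)
  gcongr
  exact inter_subset_left
end
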